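/- arXiv:1706.01057 — 3 statements merged into one kernel-verified Lean document; each statement's English description precedes it below -/
import Mathlib

section
/- Let p ∈ (0,1), let D : ℝ → ℝ be monotone increasing on the interval (0,1], and suppose D(α) tends to a limit L as α → 0 from the right within (0,1]. Define τ(α) = (α·(1−p)·D(α) + 1)/(α·(1−p) + p). Then τ(α) ≥ 1/p for every α ∈ (0,1] if and only if L ≥ 1/p; moreover, if L > 1/p, then τ(α) > 1/p for every α ∈ (0,1]. -/
/-!
The gap to the non-cooperative delay factors as
`τ α - 1 / p = α (1 - p) / (α (1 - p) + p) * (D α - 1 / p)` with a positive first factor, so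
`τ α` and `D α` compare with `1 / p` in the same way. Since `D` is monotone, its right limit `L`
at `0` is a lower bound for `D` on `(0, 1]`; conversely a lower bound for `D` passes to the limit.
-/

/-- Comparing `τ α` with `1 / p` is the same as comparing `D α` with it; `d` stands for `D α`. -/
lemma exists_pos_delay_gap {p α : ℝ} (hp : p ∈ Set.Ioo (0:ℝ) 1) (hα : 0 < α) (d : ℝ) :
    ∃ c : ℝ, 0 < c ∧
      (α * (1 - p) * d + 1) / (α * (1 - p) + p) - 1 / p = c * (d - 1 / p) := by
  obtain ⟨hp0, hp1⟩ := hp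
  have h1 : 0 < α * (1 - p) := mul_pos hα (sub_pos.mpr hp1)
  have h2 : 0 < α * (1 - p) + p := by positivity
  refine ⟨α * (1 - p) / (α * (1 - p) + p), by positivity, ?_⟩
  have h3 := h2.ne'
  have h4 := hp0.ne'
  rw [div_sub_div _ _ h3 h4, sub_eq_add_neg d, div_mul_eq_mul_div, div_eq_div_iff (by positivity) h3]
  field_simp
  ring

/-- Lemma 5: non-cooperation (delay `1/p`) is delay-optimal among
static policies iff the limiting relay delay `L = lim_{α→0⁺} D(α)` is at least `1/p`. -/
theorem stmt_4 (p : ℝ) (hp : p ∈ Set.Ioo (0:ℝ) 1) (D : ℝ → ℝ) (L : ℝ)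
    (hmono : MonotoneOn D (Set.Ioc (0:ℝ) 1))
    (hlim : Filter.Tendsto D (nhdsWithin 0 (Set.Ioc (0:ℝ) 1)) (nhds L)) :
    let τ : ℝ → ℝ := fun α => (α * (1 - p) * D α + 1) / (α * (1 - p) + p)
    ((∀ α ∈ Set.Ioc (0:ℝ) 1, τ α ≥ 1 / p) ↔ L ≥ 1 / p) ∧
    (L > 1 / p → ∀ α ∈ Set.Ioc (0:ℝ) 1, τ α > 1 / p) := by
  intro τ
  have hfilter : nhdsWithin (0:ℝ) (Set.Ioc 0 1) = nhdsWithin 0 (Set.Ioi 0) :=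
    nhdsWithin_Ioc_eq_nhdsGT one_pos
  have : (nhdsWithin (0:ℝ) (Set.Ioc 0 1)).NeBot := by
    rw [hfilter]; infer_instance
  have hL : ∀ α ∈ Set.Ioc (0:ℝ) 1, L ≤ D α := by
    intro α hα
    refine le_of_tendsto hlim ?_
    have hsmall : ∀ᶠ x in nhdsWithin (0:ℝ) (Set.Ioc 0 1), x < α :=
      (eventually_lt_nhds hα.1).filter_mono nhdsWithin_le_nhds
    filter_upwards [hsmall, self_mem_nhdsWithin] with x hx hx'
    exact hmono hx' hα hx.le
  refine ⟨⟨fun h => ?_, fun h α hα => ?_⟩, fun h α hα => ?_⟩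
  · refine ge_of_tendsto hlim ?_
    filter_upwards [self_mem_nhdsWithin] with α hα
    obtain ⟨c, hc, heq⟩ := exists_pos_delay_gap hp hα.1 (D α)
    have hgap : 0 ≤ c * (D α - 1 / p) := heq ▸ sub_nonneg.mpr (h α hα)
    exact sub_nonneg.mp (nonneg_of_mul_nonneg_right hgap hc)
  · obtain ⟨c, hc, heq⟩ := exists_pos_delay_gap hp hα.1 (D α)
    refine sub_nonneg.mp (heq.symm ▸ ?_ : 0 ≤ τ α - 1 / p)
    exact mul_nonneg hc.le (sub_nonneg.mpr (le_trans h (hL α hα)))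
  · obtain ⟨c, hc, heq⟩ := exists_pos_delay_gap hp hα.1 (D α)
    refine sub_pos.mp (heq.symm ▸ ?_ : 0 < τ α - 1 / p)
    exact mul_pos hc (sub_pos.mpr (lt_of_lt_of_le h (hL α hα)))
end

section
/- Let p ∈ (0,1) and let D : ℝ → ℝ be twice continuously differentiable. Define τ(α) = (α·(1−p)·D(α) + 1)/(α·(1−p) + p). Let α ≥ 0 be such that D'(α) ≥ 0, D''(α) ≥ 0, and D(α) < 1/p. Then the second derivative of τ at α is strictly positive: (deriv (deriv τ)) α > 0. -/
/-!
With `q = 1 - p` and `w x = x * q + p`, one has `τ = D + (1 - p * D) / w` wherever `w ≠ 0`, so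
`τ' = D' * (x * q) / w - q * (1 - p * D) / w ^ 2` and
`τ'' = D'' * (x * q) / w + 2 * p * q * D' / w ^ 2 + 2 * q ^ 2 * (1 - p * D) / w ^ 3`.
At `α` the first two terms are nonnegative, and the last is positive because `p * D α < 1`.
-/

/-- Lemma 6: strict convexity point of the end-to-end delay:
if `D'(α) ≥ 0`, `D''(α) ≥ 0` and `D(α) < 1/p`, then `τ''(α) > 0`, where
`τ(α) = (α(1-p)D(α)+1)/(α(1-p)+p)`. -/
theorem stmt_6 (p : ℝ) (hp : p ∈ Set.Ioo (0:ℝ) 1) (D : ℝ → ℝ)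
    (hD : ContDiff ℝ 2 D) (α : ℝ) (hα : 0 ≤ α)
    (hD1 : deriv D α ≥ 0) (hD2 : deriv (deriv D) α ≥ 0) (hDlt : D α < 1 / p) :
    let τ : ℝ → ℝ := fun x => (x * (1 - p) * D x + 1) / (x * (1 - p) + p)
    deriv (deriv τ) α > 0 := by
  intro τ
  obtain ⟨hp0, hp1⟩ := hp
  have hq : 0 < 1 - p := by linarith
  have hw : 0 < α * (1 - p) + p := by positivity
  have hd (x : ℝ) : HasDerivAt D (deriv D x) x :=
    (hD.differentiable (by norm_num) x).hasDerivAt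
  have hdd : HasDerivAt (deriv D) (deriv (deriv D) α) α :=
    ((hD.iterate_deriv' 1 1).differentiable (by norm_num) α).hasDerivAt
  have hu (x : ℝ) : HasDerivAt (fun y : ℝ => y * (1 - p)) (1 - p) x := by
    simpa using (hasDerivAt_id x).mul_const (1 - p)
  have hτ' : deriv τ =ᶠ[nhds α] fun x =>
      deriv D x * (x * (1 - p)) / (x * (1 - p) + p)
        - (1 - p) * (1 - p * D x) / (x * (1 - p) + p) ^ 2 := by
    have hcont : Continuous fun x : ℝ => x * (1 - p) + p := by fun_prop
    filter_upwards [hcont.continuousAt.eventually (lt_mem_nhds hw)] with x hx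
    have h := (((hu x).mul (hd x)).add_const 1).div ((hu x).add_const p) hx.ne'
    refine (h.congr_deriv ?_).deriv
    simp only [Pi.mul_apply]
    field_simp
    ring
  have hτ'' := ((hdd.mul (hu α)).div ((hu α).add_const p) hw.ne').sub
    ((((hd α).const_mul p).const_sub 1 |>.const_mul (1 - p)).div
      (((hu α).add_const p).pow 2) (pow_pos hw 2).ne')
  have key : deriv (deriv τ) α =
      deriv (deriv D) α * (α * (1 - p)) / (α * (1 - p) + p)
        + 2 * p * (1 - p) * deriv D α / (α * (1 - p) + p) ^ 2
        + 2 * (1 - p) ^ 2 * (1 - p * D α) / (α * (1 - p) + p) ^ 3 := by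
    rw [hτ'.deriv_eq]
    refine (hτ''.congr_deriv ?_).deriv
    simp only [Pi.mul_apply, Pi.pow_apply]
    field_simp
    ring
  have hpD : 0 < 1 - p * D α := by
    have := (lt_div_iff₀ hp0).1 hDlt
    linarith
  rw [key]
  positivity
end

section
/- Let n ≥ 1, let k be an index in {1,…,n}, and let F̂ and F̃ be real n×n matrices such that every row of F̃ other than row k is zero (i.e., F̃_{ij} = 0 whenever i ≠ k). Let ν : ℝ → ℝⁿ be twice differentiable (coordinatewise) such that for all β ∈ ℝ: (i) ν(β)·(F̂ + β·F̃) = ν(β) as a row-vector–matrix product, and (ii) the k-th coordinate of ν(β) equals 1. Assume moreover that the only row vector w ∈ ℝⁿ satisfying w·F̂ = w and w_k = 0 is w = 0. Then there exist vectors a, b ∈ ℝⁿ with a_k = 0 and b_k = 1 such that ν(β) = β·a + b for all β ∈ ℝ. -/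
/-! Since only row `k` of `F̃` is nonzero and `ν(β)` has `k`-th coordinate `1`, the eigenvector
equation reads `ν(β) F̂ = ν(β) - β F̃ₖ`, with `F̃ₖ` the `k`-th row of `F̃`. This is affine in `β`, so
`ν(β) - β (ν(1) - ν(0)) - ν(0)` is fixed by `F̂` and has `k`-th coordinate `0`; by the uniqueness
hypothesis it vanishes. -/

/-- Appendix B: the normalized left 1-eigenvector of the
policy-dependent transition matrix `F̂ + β·F̃` (where only row `k` of `F̃` is
nonzero) is an affine function of `β`. -/
theorem stmt_10 (n : ℕ) (hn : 1 ≤ n) (k : Fin n)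
    (Fhat Ftil : Matrix (Fin n) (Fin n) ℝ)
    (hrow : ∀ i j : Fin n, i ≠ k → Ftil i j = 0)
    (ν : ℝ → (Fin n → ℝ))
    (hdiff1 : ∀ i : Fin n, Differentiable ℝ (fun β => ν β i))
    (hdiff2 : ∀ i : Fin n, Differentiable ℝ (deriv (fun β => ν β i)))
    (heig : ∀ β : ℝ, Matrix.vecMul (ν β) (Fhat + β • Ftil) = ν β)
    (hnorm : ∀ β : ℝ, ν β k = 1)
    (huniq : ∀ w : Fin n → ℝ, Matrix.vecMul w Fhat = w → w k = 0 → w = 0) :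
    ∃ a b : Fin n → ℝ, a k = 0 ∧ b k = 1 ∧ ∀ β : ℝ, ν β = β • a + b := by
  have hrowk : ∀ β : ℝ, Matrix.vecMul (ν β) Ftil = Ftil k := by
    intro β
    ext j
    rw [Matrix.vecMul, dotProduct, Finset.sum_eq_single k]
    · rw [hnorm, one_mul]
    · intro i _ hi
      rw [hrow i j hi, mul_zero]
    · simp
  have hfix : ∀ β : ℝ, Matrix.vecMul (ν β) Fhat = ν β - β • Ftil k := by
    intro β
    have h := heig β
    rw [Matrix.vecMul_add, Matrix.vecMul_smul, hrowk] at h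
    exact eq_sub_of_add_eq h
  refine ⟨ν 1 - ν 0, ν 0, by simp [hnorm], hnorm 0, fun β => ?_⟩
  have hw := huniq (ν β - (β • (ν 1 - ν 0) + ν 0)) (by
    simp only [Matrix.sub_vecMul, Matrix.add_vecMul, Matrix.smul_vecMul, hfix]
    module) (by simp [hnorm])
  exact sub_eq_zero.mp hw
end
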